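/- Let a, b, c be pairwise coprime positive integers with c² = a² + b² + ab, and let m be a positive integer such that the equilateral triangle with side length m·ab tiles into m²·ab congruent copies of the triangle with side lengths (a, b, c). Then the isosceles triangle with side lengths (m·a·c, m·a·c, m·a·(b+2a)) tiles into m²·a·(b+2a) congruent copies of the triangle with side lengths (a, b, c). -/

import Mathlib

noncomputable section

abbrev Plane := EuclideanSpace ℝ (Fin 2)

/-- The point (x, y) in the Euclidean plane. -/
def pt (x y : ℝ) : Plane := (WithLp.equiv 2 (Fin 2 → ℝ)).symm ![x, y]

/-- `Δ` is a triangle with side lengths `(p, q, r)`: the convex hull of points `P, Q, R`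
with `dist Q R = p`, `dist P R = q`, `dist P Q = r`. -/
def IsTriangle (p q r : ℝ) (Δ : Set Plane) : Prop :=
  ∃ P Q R : Plane, dist Q R = p ∧ dist P R = q ∧ dist P Q = r ∧
    Δ = convexHull ℝ {P, Q, R}

/-- `S` tiles into `N` congruent copies of the `(p, q, r)` triangle: there are isometries
`f 1, …, f N` of the plane and a triangle `Δ` with side lengths `(p, q, r)` such that
`S` is the union of the `f i '' Δ` and their interiors are pairwise disjoint. -/
def TilesInto (S : Set Plane) (N : ℕ) (p q r : ℝ) : Prop :=
  ∃ (f : Fin N → Plane ≃ᵢ Plane) (Δ : Set Plane),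
    IsTriangle p q r Δ ∧
    S = ⋃ i, f i '' Δ ∧
    ∀ i j : Fin N, i ≠ j → interior (f i '' Δ) ∩ interior (f j '' Δ) = ∅

/-- The equilateral triangle with side length `X`. -/
def EquilateralTri (X : ℝ) : Set Plane :=
  convexHull ℝ {pt 0 0, pt X 0, pt (X/2) (X * Real.sqrt 3 / 2)}

/-!
Let `P Y Z` be the isosceles triangle with apex `P`, legs `n c` and base `n (b + 2 a)`, where
`n = m a`. Mark `Q` and `R` on the base so that `YQ = RZ = n a` and `QR = n b`. Since
`c² = a² + b² + a b`, Stewart's theorem gives `PQ = PR = n b`. Hence `P Q R` is equilateral with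
side `n b`, and the given tiling is carried onto it by a congruence, while `P Y Q` and `P R Z` are
copies of the tile enlarged `n` times, which a triangular lattice splits into `n²` tiles each.
-/

section Convexity

open Set AffineMap

variable {E : Type*} [AddCommGroup E] [Module ℝ E]

lemma segment_union_segment_of_wbtw {x y z : E} (h : Wbtw ℝ x y z) :
    segment ℝ x y ∪ segment ℝ y z = segment ℝ x z := by
  obtain ⟨θ, ⟨hθ₀, hθ₁⟩, rfl⟩ := h
  have segment_lineMap {s t : ℝ} (hst : s ≤ t) :
      segment ℝ (lineMap x z s) (lineMap x z t) = lineMap x z '' Icc s t := by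
    rw [← segment_eq_Icc hst, image_segment]
  simpa only [segment_eq_image_lineMap ℝ x z, lineMap_apply_zero, lineMap_apply_one,
    Icc_union_Icc_eq_Icc hθ₀ hθ₁, ← image_union] using
    congrArg₂ (· ∪ ·) (segment_lineMap hθ₀) (segment_lineMap hθ₁)

lemma convexHull_triple_union_of_wbtw {y x z : E} (h : Wbtw ℝ y x z) (p : E) :
    convexHull ℝ {p, y, x} ∪ convexHull ℝ {p, x, z} = convexHull ℝ {p, y, z} := by
  simp only [convexHull_insert (insert_nonempty _ _), convexHull_pair]
  rw [← convexJoin_union_right, segment_union_segment_of_wbtw h]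

lemma mem_convexHull_add_add_iff {p u v x : E} :
    x ∈ convexHull ℝ {p, p + u, p + v} ↔
      ∃ s t : ℝ, 0 ≤ s ∧ 0 ≤ t ∧ s + t ≤ 1 ∧ p + s • u + t • v = x := by
  constructor
  · rw [convexHull_insert (insert_nonempty _ _), convexHull_pair, convexJoin_singleton_left]
    simp only [mem_iUnion, segment_eq_image_lineMap, exists_prop]
    rintro ⟨_, ⟨β, ⟨hβ₀, hβ₁⟩, rfl⟩, α, ⟨hα₀, hα₁⟩, rfl⟩
    refine ⟨α * (1 - β), α * β, mul_nonneg hα₀ (sub_nonneg.2 hβ₁), mul_nonneg hα₀ hβ₀,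
      by linarith, ?_⟩
    simp only [lineMap_apply_module]
    module
  · rintro ⟨s, t, hs, ht, hst, rfl⟩
    have h := (convex_convexHull ℝ {p, p + u, p + v}).sum_mem (t := Finset.univ)
      (w := ![1 - s - t, s, t]) (z := ![p, p + u, p + v])
      (by simpa [Fin.forall_fin_succ, hs, ht] using by linarith)
      (by simp only [Fin.sum_univ_three, Matrix.cons_val]; ring)
      (by simpa [Fin.forall_fin_succ, insert_subset_iff] using
        subset_convexHull ℝ {p, p + u, p + v})
    convert h using 1
    simp only [Fin.sum_univ_three, Matrix.cons_val]
    module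

lemma mem_convexHull_add_smul_iff {p u v x : E} {r : ℝ} (hr : 0 < r) :
    x ∈ convexHull ℝ {p, p + r • u, p + r • v} ↔
      ∃ s t : ℝ, 0 ≤ s ∧ 0 ≤ t ∧ s + t ≤ r ∧ p + s • u + t • v = x := by
  rw [mem_convexHull_add_add_iff]
  constructor
  · rintro ⟨s, t, hs, ht, hst, rfl⟩
    exact ⟨s * r, t * r, by positivity, by positivity, by nlinarith, by module⟩
  · rintro ⟨s, t, hs, ht, hst, rfl⟩
    refine ⟨s / r, t / r, by positivity, by positivity, ?_, ?_⟩
    · rwa [← add_div, div_le_one hr]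
    · rw [smul_smul, smul_smul, div_mul_cancel₀ _ hr.ne', div_mul_cancel₀ _ hr.ne']

end Convexity

section Separation

open Set AffineMap Module

variable {E : Type*}

lemma disjoint_interior_of_le [AddCommGroup E] [TopologicalSpace E] [ContinuousAdd E]
    [Module ℝ E] [ContinuousSMul ℝ E] {A B : Set E} {f : StrongDual ℝ E} (hf : f ≠ 0) {k : ℝ}
    (hA : ∀ x ∈ A, f x ≤ k) (hB : ∀ x ∈ B, k ≤ f x) : Disjoint (interior A) (interior B) := by
  have interior_preimage (s : Set ℝ) : interior (f ⁻¹' s) = f ⁻¹' interior s :=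
    ((f.isOpenMap_of_ne_zero hf).preimage_interior_eq_interior_preimage f.continuous s).symm
  have hA' : interior A ⊆ f ⁻¹' Iio k := by
    rw [← interior_Iic, ← interior_preimage]
    exact interior_mono hA
  have hB' : interior B ⊆ f ⁻¹' Ioi k := by
    rw [← interior_Ici, ← interior_preimage]
    exact interior_mono hB
  exact (Disjoint.preimage f (Iio_disjoint_Ioi_of_le le_rfl)).mono hA' hB'

variable [NormedAddCommGroup E] [NormedSpace ℝ E]

lemma exists_dual_ne_zero_apply_eq_zero_nonneg (hE : 1 < finrank ℝ E) (u v : E) :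
    ∃ f : StrongDual ℝ E, f ≠ 0 ∧ f v = 0 ∧ 0 ≤ f u := by
  have : FiniteDimensional ℝ E := .of_finrank_pos (zero_lt_one.trans hE)
  have span_lt_top : Submodule.span ℝ {v} < ⊤ :=
    Submodule.lt_top_of_finrank_lt_finrank ((finrank_span_le_card {v}).trans_lt (by simpa))
  obtain ⟨g, hg, hgv⟩ := Submodule.exists_le_ker_of_lt_top _ span_lt_top
  have hgv : g v = 0 := hgv (Submodule.mem_span_singleton_self v)
  have hg : g.toContinuousLinearMap ≠ 0 := by simpa
  rcases le_total 0 (g u) with hu | hu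
  · exact ⟨g.toContinuousLinearMap, hg, hgv, hu⟩
  · exact ⟨-g.toContinuousLinearMap, neg_ne_zero.2 hg, by simp [hgv], by simpa⟩

lemma disjoint_interior_convexHull_of_wbtw (hE : 1 < finrank ℝ E) {y x z : E}
    (h : Wbtw ℝ y x z) (p : E) :
    Disjoint (interior (convexHull ℝ {p, y, x})) (interior (convexHull ℝ {p, x, z})) := by
  obtain ⟨f, hf, hfpx, hfyz⟩ := exists_dual_ne_zero_apply_eq_zero_nonneg hE (z - y) (p - x)
  have hfp : f p = f x := by rwa [map_sub, sub_eq_zero] at hfpx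
  have hyz : f y ≤ f z := by rwa [map_sub, sub_nonneg] at hfyz
  obtain ⟨hyx, hxz⟩ : f y ≤ f x ∧ f x ≤ f z :=
    (wbtw_iff_of_le hyz).1 (h.map f.toLinearMap.toAffineMap)
  have hull_le : convexHull ℝ {p, y, x} ⊆ {w | f w ≤ f x} :=
    convexHull_min (by simp [insert_subset_iff, hfp, hyx])
      (convex_halfSpace_le f.toLinearMap.isLinear _)
  have le_hull : convexHull ℝ {p, x, z} ⊆ {w | f x ≤ f w} :=
    convexHull_min (by simp [insert_subset_iff, hfp, hxz])
      (convex_halfSpace_ge f.toLinearMap.isLinear _)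
  exact disjoint_interior_of_le hf hull_le le_hull

lemma disjoint_interior_of_coord_le (hE : 1 < finrank ℝ E) {p u v : E} {k : ℝ} {A B : Set E}
    (hA : ∀ x ∈ A, ∃ s t : ℝ, s ≤ k ∧ p + s • u + t • v = x)
    (hB : ∀ x ∈ B, ∃ s t : ℝ, k ≤ s ∧ p + s • u + t • v = x) :
    Disjoint (interior A) (interior B) := by
  obtain ⟨f, hf, hfv, hfu⟩ := exists_dual_ne_zero_apply_eq_zero_nonneg hE u v
  have apply_coord (s t : ℝ) : f (p + s • u + t • v) = f p + s * f u := by simp [hfv]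
  refine disjoint_interior_of_le hf (k := f p + k * f u) (fun x hx ↦ ?_) (fun x hx ↦ ?_)
  · obtain ⟨s, t, hs, rfl⟩ := hA x hx
    rw [apply_coord]
    gcongr
  · obtain ⟨s, t, hs, rfl⟩ := hB x hx
    rw [apply_coord]
    gcongr

end Separation

section LatticeCells

open Set Module

variable {E : Type*}

/-- A triangular cell of the lattice `p + ℤ u + ℤ v`, cut out by one strip in each of the three
coordinates `s`, `t` and `s + t`. It is a translate of the triangle `0, u, v` if `k = i + j`, and
of the inverted triangle `0, -u, -v` if `k = i + j + 1`; the three strips make the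
cells separated in whichever index they differ. -/
def latticeCell [AddCommGroup E] [Module ℝ E] (p u v : E) (i j k : ℤ) : Set E :=
  {x | ∃ s t : ℝ, s ∈ Icc (i : ℝ) (i + 1) ∧ t ∈ Icc (j : ℝ) (j + 1) ∧
    s + t ∈ Icc (k : ℝ) (k + 1) ∧ p + s • u + t • v = x}

/-- The tiles of a triangle with sides `n • u` and `n • v` at `p`, indexed by `x, y < n`. The `k`-th
row (`k ≤ s + t ≤ k + 1`) consists of the upright cells with `x ≤ y = k` and the inverted cells
with `y < x = k`, so that the pairs `(x, y)` number all `n ^ 2` tiles. -/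
def triangleTile [AddCommGroup E] [Module ℝ E] (p u v : E) (x y : ℕ) : Set E :=
  if x ≤ y then latticeCell p u v x (y - x) y else latticeCell p u v y (x - y - 1) x

section Module

variable [AddCommGroup E] [Module ℝ E] (p u v : E)

lemma latticeCell_upright (i j : ℤ) :
    latticeCell p u v i j (i + j) =
      convexHull ℝ {p + i • u + j • v, p + i • u + j • v + u, p + i • u + j • v + v} := by
  ext x
  rw [mem_convexHull_add_add_iff]
  constructor
  · rintro ⟨s, t, ⟨hs, -⟩, ⟨ht, -⟩, ⟨-, hst⟩, rfl⟩
    push_cast at hst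
    exact ⟨s - i, t - j, by linarith, by linarith, by linarith, by module⟩
  · rintro ⟨s, t, hs, ht, hst, rfl⟩
    refine ⟨i + s, j + t, ⟨?_, ?_⟩, ⟨?_, ?_⟩, ⟨?_, ?_⟩, by module⟩ <;> push_cast <;> linarith

lemma latticeCell_inverted (i j : ℤ) :
    latticeCell p u v i j (i + j + 1) =
      convexHull ℝ {p + (i + 1) • u + (j + 1) • v, p + (i + 1) • u + (j + 1) • v + -u,
        p + (i + 1) • u + (j + 1) • v + -v} := by
  ext x
  rw [mem_convexHull_add_add_iff]
  constructor
  · rintro ⟨s, t, ⟨-, hs⟩, ⟨-, ht⟩, ⟨hst, -⟩, rfl⟩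
    push_cast at hst
    exact ⟨i + 1 - s, j + 1 - t, by linarith, by linarith, by linarith, by module⟩
  · rintro ⟨s, t, hs, ht, hst, rfl⟩
    refine ⟨i + 1 - s, j + 1 - t, ⟨?_, ?_⟩, ⟨?_, ?_⟩, ⟨?_, ?_⟩, by module⟩ <;>
      push_cast <;> linarith

variable {p u v}

lemma triangleTile_subset_convexHull {n x y : ℕ} (hx : x < n) (hy : y < n) :
    triangleTile p u v x y ⊆ convexHull ℝ {p, p + (n : ℝ) • u, p + (n : ℝ) • v} := by
  have hx' : (x : ℝ) + 1 ≤ n := by exact_mod_cast hx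
  have hy' : (y : ℝ) + 1 ≤ n := by exact_mod_cast hy
  intro z hz
  rw [mem_convexHull_add_smul_iff (by exact_mod_cast hx.pos)]
  unfold triangleTile at hz
  split_ifs at hz with hxy <;> obtain ⟨s, t, hs, ht, hst, rfl⟩ := hz <;>
    simp only [mem_Icc] at hs ht hst <;> push_cast at hs ht hst
  · have hxy' : (x : ℝ) ≤ y := by exact_mod_cast hxy
    exact ⟨s, t, by linarith, by linarith, by linarith, rfl⟩
  · have hxy' : (y : ℝ) + 1 ≤ x := by exact_mod_cast not_le.1 hxy
    exact ⟨s, t, by linarith, by linarith, by linarith, rfl⟩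

lemma exists_lt_mem_Icc_natCast {x : ℝ} {n : ℕ} (hn : 0 < n) (h₀ : 0 ≤ x) (h : x ≤ n) :
    ∃ k < n, x ∈ Icc (k : ℝ) (k + 1) := by
  rcases h.eq_or_lt with rfl | h
  · exact ⟨n - 1, by omega, by simp [Nat.cast_pred hn]⟩
  · exact ⟨⌊x⌋₊, (Nat.floor_lt h₀).2 h, Nat.floor_le h₀, (Nat.lt_floor_add_one x).le⟩

lemma exists_mem_triangleTile {n : ℕ} (hn : 0 < n) {z : E}
    (hz : z ∈ convexHull ℝ {p, p + (n : ℝ) • u, p + (n : ℝ) • v}) :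
    ∃ x < n, ∃ y < n, z ∈ triangleTile p u v x y := by
  rw [mem_convexHull_add_smul_iff (by exact_mod_cast hn)] at hz
  obtain ⟨s, t, hs, ht, hst, rfl⟩ := hz
  obtain ⟨k, hk, hst_k⟩ := exists_lt_mem_Icc_natCast hn (add_nonneg hs ht) hst
  obtain ⟨i, hi, hs_i⟩ : ∃ i < k + 1, s ∈ Icc (i : ℝ) (i + 1) :=
    exists_lt_mem_Icc_natCast k.succ_pos hs (by push_cast; linarith [hst_k.2])
  by_cases ht_ki : (k - i : ℝ) ≤ t
  · refine ⟨i, by omega, k, hk, ?_⟩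
    rw [triangleTile, if_pos (by omega)]
    refine ⟨s, t, mod_cast hs_i, ?_, mod_cast hst_k, rfl⟩
    push_cast
    constructor <;> linarith [hs_i.1, hst_k.2]
  · have hik : i < k := by
      have : (i : ℝ) < k := by linarith
      exact_mod_cast this
    refine ⟨k, hk, i, by omega, ?_⟩
    rw [triangleTile, if_neg (by omega)]
    refine ⟨s, t, mod_cast hs_i, ?_, mod_cast hst_k, rfl⟩
    push_cast
    constructor <;> linarith [hs_i.2, hst_k.1]

lemma iUnion_triangleTile {n : ℕ} (hn : 0 < n) :
    ⋃ x : Fin n × Fin n, triangleTile p u v x.1 x.2 =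
      convexHull ℝ {p, p + (n : ℝ) • u, p + (n : ℝ) • v} := by
  refine (iUnion_subset fun x ↦ triangleTile_subset_convexHull x.1.2 x.2.2).antisymm
    fun z hz ↦ ?_
  obtain ⟨x, hx, y, hy, hz⟩ := exists_mem_triangleTile hn hz
  exact mem_iUnion.2 ⟨(⟨x, hx⟩, ⟨y, hy⟩), hz⟩

end Module

variable [NormedAddCommGroup E] [NormedSpace ℝ E]

lemma disjoint_interior_latticeCell_of_lt (hE : 1 < finrank ℝ E) (p u v : E)
    {i j k i' j' k' : ℤ} (h : i < i' ∨ j < j' ∨ k < k') :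
    Disjoint (interior (latticeCell p u v i j k)) (interior (latticeCell p u v i' j' k')) := by
  rcases h with h | h | h <;> rw [← Int.add_one_le_iff, ← Int.cast_le (R := ℝ)] at h <;>
    push_cast at h
  · refine disjoint_interior_of_coord_le hE (p := p) (u := u) (v := v) (k := i') ?_ ?_ <;>
      rintro _ ⟨s, t, ⟨_, _⟩, -, -, rfl⟩ <;> exact ⟨s, t, by linarith, rfl⟩
  · refine disjoint_interior_of_coord_le hE (p := p) (u := v) (v := u) (k := j') ?_ ?_ <;>
      rintro _ ⟨s, t, -, ⟨_, _⟩, -, rfl⟩ <;> exact ⟨t, s, by linarith, by module⟩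
  · refine disjoint_interior_of_coord_le hE (p := p) (u := u) (v := v - u) (k := k') ?_ ?_ <;>
      rintro _ ⟨s, t, -, -, ⟨_, _⟩, rfl⟩ <;> exact ⟨s + t, t, by linarith, by module⟩

lemma disjoint_interior_latticeCell (hE : 1 < finrank ℝ E) (p u v : E)
    {i j k i' j' k' : ℤ} (h : i ≠ i' ∨ j ≠ j' ∨ k ≠ k') :
    Disjoint (interior (latticeCell p u v i j k)) (interior (latticeCell p u v i' j' k')) := by
  by_cases hlt : i < i' ∨ j < j' ∨ k < k'
  · exact disjoint_interior_latticeCell_of_lt hE p u v hlt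
  · exact (disjoint_interior_latticeCell_of_lt hE p u v (by omega)).symm

lemma disjoint_interior_triangleTile (hE : 1 < finrank ℝ E) (p u v : E) {x y x' y' : ℕ}
    (h : x ≠ x' ∨ y ≠ y') :
    Disjoint (interior (triangleTile p u v x y)) (interior (triangleTile p u v x' y')) := by
  unfold triangleTile
  split_ifs <;> exact disjoint_interior_latticeCell hE p u v (by omega)

end LatticeCells

section Isometries

open Set

variable {V : Type*} [NormedAddCommGroup V]

lemma image_isometryEquiv_convexHull [NormedSpace ℝ V] (f : V ≃ᵢ V) (s : Set V) :
    f '' convexHull ℝ s = convexHull ℝ (f '' s) := by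
  simpa using AffineMap.image_convexHull f.toRealAffineIsometryEquiv.toAffineEquiv.toAffineMap s

variable [InnerProductSpace ℝ V]

lemma exists_linearIsometryEquiv_apply_eq_and_apply_eq {u v u' v' : V} (hu : ‖u‖ = ‖u'‖)
    (hv : ‖v‖ = ‖v'‖) (huv : ‖u - v‖ = ‖u' - v'‖) :
    ∃ L : V ≃ₗᵢ[ℝ] V, L u = u' ∧ L v = v' := by
  set L₁ := (ℝ ∙ (u - u'))ᗮ.reflection
  have hL₁u : L₁ u = u' := Submodule.reflection_sub hu
  have norm_L₁v : ‖L₁ v‖ = ‖v'‖ := by rw [L₁.norm_map, hv]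
  set L₂ := (ℝ ∙ (L₁ v - v'))ᗮ.reflection
  have hL₂v : L₂ (L₁ v) = v' := Submodule.reflection_sub norm_L₁v
  have norm_sub : ‖u' - L₁ v‖ = ‖u' - v'‖ := by rw [← huv, ← L₁.norm_map (u - v), map_sub, hL₁u]
  have inner_eq : inner ℝ u' (L₁ v) = inner ℝ u' v' := by
    rw [real_inner_eq_norm_mul_self_add_norm_mul_self_sub_norm_sub_mul_self_div_two, norm_sub,
      norm_L₁v, ← real_inner_eq_norm_mul_self_add_norm_mul_self_sub_norm_sub_mul_self_div_two]
  have hL₂u' : L₂ u' = u' := by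
    rw [Submodule.reflection_eq_self_iff, Submodule.mem_orthogonal_singleton_iff_inner_left,
      inner_sub_right, inner_eq, sub_self]
  exact ⟨L₁.trans L₂, by simp [hL₁u, hL₂u'], by simp [hL₂v]⟩

lemma exists_isometryEquiv_of_dist_eq {x y z x' y' z' : V} (hyz : dist y z = dist y' z')
    (hxz : dist x z = dist x' z') (hxy : dist x y = dist x' y') :
    ∃ f : V ≃ᵢ V, f x = x' ∧ f y = y' ∧ f z = z' := by
  obtain ⟨L, hy, hz⟩ := exists_linearIsometryEquiv_apply_eq_and_apply_eq
    (u := y - x) (v := z - x) (u' := y' - x') (v' := z' - x')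
    (by simpa only [dist_eq_norm'] using hxy) (by simpa only [dist_eq_norm'] using hxz)
    (by simpa only [sub_sub_sub_cancel_right, dist_eq_norm] using hyz)
  refine ⟨((IsometryEquiv.subRight x).trans L.toIsometryEquiv).trans
    (IsometryEquiv.addRight x'), ?_, ?_, ?_⟩ <;> simp [hy, hz]

end Isometries

section IsoscelesTriangle

open AffineMap

variable {V : Type*} [NormedAddCommGroup V] [InnerProductSpace ℝ V]

lemma dist_sq_lineMap (p y z : V) (θ : ℝ) :
    dist p (lineMap y z θ) ^ 2 =
      (1 - θ) * dist p y ^ 2 + θ * dist p z ^ 2 - θ * (1 - θ) * dist y z ^ 2 := by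
  have sub_lineMap : p - lineMap y z θ = (1 - θ) • (p - y) + θ • (p - z) := by
    rw [lineMap_apply_module]
    module
  have norm_sub_yz := norm_sub_sq_real (p - y) (p - z)
  rw [sub_sub_sub_cancel_left, ← neg_sub, norm_neg] at norm_sub_yz
  simp only [dist_eq_norm, sub_lineMap, norm_add_sq_real, inner_smul_left, inner_smul_right,
    norm_smul, mul_pow, Real.norm_eq_abs, sq_abs, norm_sub_yz, RCLike.conj_to_real]
  ring

lemma exists_dist_eq_of_isosceles {a b c : ℝ} (ha : 0 < a) (hb : 0 < b)
    (h : c ^ 2 = a ^ 2 + b ^ 2 + a * b) {p y z : V} (hyz : dist y z = b + 2 * a)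
    (hpz : dist p z = c) (hpy : dist p y = c) :
    ∃ q r : V, Wbtw ℝ y q z ∧ Wbtw ℝ q r z ∧ dist y q = a ∧ dist q r = b ∧ dist r z = a ∧
      dist p q = b ∧ dist p r = b := by
  have hw : 0 < b + 2 * a := by positivity
  set θ := a / (b + 2 * a) with hθ
  set φ := (a + b) / (b + 2 * a) with hφ
  have hθ₀ : 0 ≤ θ := by positivity
  have hθφ : θ ≤ φ := by unfold θ φ; gcongr; linarith
  have hφ₁ : φ ≤ 1 := by rw [div_le_one hw]; linarith
  have dist_p {ψ : ℝ} (hψ : ψ * (1 - ψ) * (b + 2 * a) ^ 2 = a * (a + b)) :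
      dist p (lineMap y z ψ) = b := by
    rw [← sq_eq_sq₀ dist_nonneg hb.le, dist_sq_lineMap, hpy, hpz, hyz]
    linear_combination h - hψ
  refine ⟨lineMap y z θ, lineMap y z φ, ⟨θ, ⟨hθ₀, hθφ.trans hφ₁⟩, rfl⟩, ?_, ?_, ?_, ?_,
    dist_p ?_, dist_p ?_⟩
  · simpa using ((wbtw_iff_of_le (hθφ.trans hφ₁)).2 ⟨hθφ, hφ₁⟩).map (lineMap y z)
  · rw [dist_left_lineMap, Real.norm_of_nonneg hθ₀, hyz, hθ]
    field_simp
  · rw [dist_lineMap_lineMap, Real.dist_eq, abs_sub_comm, abs_of_nonneg (by linarith), hyz,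
      hθ, hφ]
    field_simp
    ring
  · rw [dist_lineMap_right, Real.norm_of_nonneg (by linarith), hyz, hφ]
    field_simp
    ring
  · rw [hθ]; field_simp; ring
  · rw [hφ]; field_simp; ring

end IsoscelesTriangle

section Tilings

open Set Module

lemma one_lt_finrank_plane : 1 < finrank ℝ Plane := by simp

lemma isTriangle_convexHull_add_add (P u v : Plane) :
    IsTriangle ‖u - v‖ ‖v‖ ‖u‖ (convexHull ℝ {P, P + u, P + v}) :=
  ⟨P, P + u, P + v, by simp [dist_eq_norm], by simp, by simp, rfl⟩

lemma isTriangle_triangleTile (P u v : Plane) (x y : ℕ) :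
    IsTriangle ‖u - v‖ ‖v‖ ‖u‖ (triangleTile P u v x y) := by
  unfold triangleTile
  split_ifs
  · rw [← add_sub_cancel (x : ℤ) y, add_sub_cancel_left, latticeCell_upright]
    exact isTriangle_convexHull_add_add _ u v
  · obtain ⟨j, hj⟩ : ∃ j : ℤ, (x : ℤ) = y + j + 1 := ⟨x - y - 1, by ring⟩
    rw [hj, add_sub_right_comm, add_sub_cancel_right, add_sub_cancel_left, latticeCell_inverted,
      norm_sub_rev, ← neg_sub_neg, ← norm_neg u, ← norm_neg v]
    exact isTriangle_convexHull_add_add _ (-u) (-v)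

lemma isTriangle_equilateralTri {X : ℝ} (hX : 0 ≤ X) : IsTriangle X X X (EquilateralTri X) := by
  have sqrt_three_sq : √3 ^ 2 = 3 := Real.sq_sqrt (by norm_num)
  refine ⟨_, _, _, ?_, ?_, ?_, rfl⟩ <;>
    rw [← sq_eq_sq₀ dist_nonneg hX, EuclideanSpace.dist_sq_eq, Fin.sum_univ_two] <;>
    simp only [pt, Real.dist_eq, sq_abs, WithLp.equiv_symm_apply_ofLp, Matrix.cons_val]
  · linear_combination X ^ 2 / 4 * sqrt_three_sq
  · linear_combination X ^ 2 / 4 * sqrt_three_sq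
  · ring

namespace IsTriangle

variable {p q r : ℝ} {Δ Δ' : Set Plane}

lemma rotate (h : IsTriangle p q r Δ) : IsTriangle r p q Δ := by
  obtain ⟨P, Q, R, hQR, hPR, hPQ, rfl⟩ := h
  exact ⟨R, P, Q, hPQ, by rwa [dist_comm], by rwa [dist_comm],
    by rw [insert_comm R, pair_comm R]⟩

lemma swap (h : IsTriangle p q r Δ) : IsTriangle p r q Δ := by
  obtain ⟨P, Q, R, hQR, hPR, hPQ, rfl⟩ := h
  exact ⟨P, R, Q, by rwa [dist_comm], hPQ, hPR, by rw [pair_comm Q R]⟩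

lemma image (h : IsTriangle p q r Δ) (f : Plane ≃ᵢ Plane) : IsTriangle p q r (f '' Δ) := by
  obtain ⟨P, Q, R, rfl, rfl, rfl, rfl⟩ := h
  exact ⟨f P, f Q, f R, f.dist_eq Q R, f.dist_eq P R, f.dist_eq P Q,
    by rw [image_isometryEquiv_convexHull, image_insert_eq, image_pair]⟩

lemma exists_image_eq (h : IsTriangle p q r Δ) (h' : IsTriangle p q r Δ') :
    ∃ f : Plane ≃ᵢ Plane, f '' Δ = Δ' := by
  obtain ⟨P, Q, R, hQR, hPR, hPQ, rfl⟩ := h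
  obtain ⟨P', Q', R', hQR', hPR', hPQ', rfl⟩ := h'
  obtain ⟨f, rfl, rfl, rfl⟩ := exists_isometryEquiv_of_dist_eq
    (hQR.trans hQR'.symm) (hPR.trans hPR'.symm) (hPQ.trans hPQ'.symm)
  exact ⟨f, by rw [image_isometryEquiv_convexHull, image_insert_eq, image_pair]⟩

end IsTriangle

lemma tilesInto_card_of_iUnion_eq {ι : Type*} [Fintype ι] [Nonempty ι] {S : Set Plane} {p q r : ℝ}
    {T : ι → Set Plane} (hT : ∀ i, IsTriangle p q r (T i)) (hS : ⋃ i, T i = S)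
    (hdisj : Pairwise fun i j ↦ Disjoint (interior (T i)) (interior (T j))) :
    TilesInto S (Fintype.card ι) p q r := by
  obtain ⟨i₀⟩ := ‹Nonempty ι›
  choose f hf using fun i ↦ (hT i₀).exists_image_eq (hT i)
  let e := (Fintype.equivFin ι).symm
  refine ⟨f ∘ e, T i₀, hT i₀, ?_, fun i j hij ↦ ?_⟩
  · simp only [Function.comp_apply, hf, ← hS]
    exact (e.surjective.iUnion_comp T).symm
  · simp only [Function.comp_apply, hf]
    exact (hdisj (e.injective.ne hij)).inter_eq

lemma IsTriangle.tilesInto_sq {n : ℕ} (hn : 0 < n) {p q r : ℝ} {Δ : Set Plane}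
    (h : IsTriangle (n * p) (n * q) (n * r) Δ) : TilesInto Δ (n ^ 2) p q r := by
  obtain ⟨P, Q, R, hQR, hPR, hPQ, rfl⟩ := h
  have : Nonempty (Fin n) := ⟨⟨0, hn⟩⟩
  have hn₀ : (n : ℝ) ≠ 0 := by exact_mod_cast hn.ne'
  have smul_eq (A : Plane) : P + (n : ℝ) • (n : ℝ)⁻¹ • (A - P) = A := by
    rw [smul_inv_smul₀ hn₀, add_sub_cancel]
  have norm_eq {A B : Plane} {l : ℝ} (hAB : dist A B = n * l) : ‖(n : ℝ)⁻¹ • (B - A)‖ = l := by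
    rw [norm_smul, ← dist_eq_norm', hAB]
    simp [hn₀]
  set u := (n : ℝ)⁻¹ • (Q - P)
  set v := (n : ℝ)⁻¹ • (R - P)
  have norm_u : ‖u‖ = r := norm_eq hPQ
  have norm_v : ‖v‖ = q := norm_eq hPR
  have norm_u_sub_v : ‖u - v‖ = p := by
    rw [← smul_sub, sub_sub_sub_cancel_right]
    exact norm_eq (by rwa [dist_comm])
  have isTriangle_tile (x : Fin n × Fin n) : IsTriangle p q r (triangleTile P u v x.1 x.2) := by
    simpa only [norm_u, norm_v, norm_u_sub_v] using isTriangle_triangleTile P u v x.1 x.2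
  have disjoint_tiles : Pairwise fun x y : Fin n × Fin n ↦
      Disjoint (interior (triangleTile P u v x.1 x.2)) (interior (triangleTile P u v y.1 y.2)) :=
    fun x y hxy ↦ disjoint_interior_triangleTile one_lt_finrank_plane P u v (by
      contrapose! hxy
      exact Prod.ext (Fin.ext hxy.1) (Fin.ext hxy.2))
  have union_tiles := iUnion_triangleTile (p := P) (u := u) (v := v) hn
  rw [smul_eq, smul_eq] at union_tiles
  simpa [sq] using tilesInto_card_of_iUnion_eq isTriangle_tile union_tiles disjoint_tiles

namespace TilesInto

variable {S S' : Set Plane} {M N : ℕ} {p q r : ℝ}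

lemma image (h : TilesInto S N p q r) (g : Plane ≃ᵢ Plane) : TilesInto (g '' S) N p q r := by
  obtain ⟨f, Δ, hΔ, rfl, hdisj⟩ := h
  have image_trans (i : Fin N) : (f i).trans g '' Δ = g '' (f i '' Δ) := image_comp g (f i) Δ
  refine ⟨fun i ↦ (f i).trans g, Δ, hΔ, ?_, fun i j hij ↦ ?_⟩
  · simp only [image_trans, image_iUnion]
  · have interior_image (A : Set Plane) : interior (g '' A) = g '' interior A :=
      (g.toHomeomorph.image_interior A).symm
    rw [image_trans, image_trans, interior_image, interior_image, ← image_inter g.injective,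
      hdisj i j hij, image_empty]

lemma union (h : TilesInto S M p q r) (h' : TilesInto S' N p q r)
    (hdisj : Disjoint (interior S) (interior S')) : TilesInto (S ∪ S') (M + N) p q r := by
  obtain ⟨f, Δ, hΔ, rfl, hf⟩ := h
  obtain ⟨f', Δ', hΔ', rfl, hf'⟩ := h'
  obtain ⟨g, rfl⟩ := hΔ.exists_image_eq hΔ'
  have image_trans (j : Fin N) : g.trans (f' j) '' Δ = f' j '' (g '' Δ) := image_comp (f' j) g Δ
  have disjoint_tiles (i : Fin M) (j : Fin N) :
      interior (f i '' Δ) ∩ interior (f' j '' (g '' Δ)) = ∅ :=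
    (hdisj.mono (interior_mono (subset_iUnion_of_subset i subset_rfl))
      (interior_mono (subset_iUnion_of_subset j subset_rfl))).inter_eq
  refine ⟨Fin.append f fun j ↦ g.trans (f' j), Δ, hΔ, ?_, ?_⟩
  · ext x
    simp only [mem_union, mem_iUnion, finSumFinEquiv.surjective.exists, Sum.exists,
      finSumFinEquiv_apply_left, finSumFinEquiv_apply_right, Fin.append_left, Fin.append_right,
      image_trans]
  · intro i j hij
    induction i using Fin.addCases <;> induction j using Fin.addCases <;>
      simp only [Fin.append_left, Fin.append_right, image_trans]
    case left.left i j => exact hf i j (by simpa using hij)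
    case left.right i j => exact disjoint_tiles i j
    case right.left i j => rw [inter_comm]; exact disjoint_tiles j i
    case right.right i j => exact hf' i j (by simpa using hij)

lemma of_wbtw {A B X C : Plane} (h : Wbtw ℝ B X C)
    (hB : TilesInto (convexHull ℝ {A, B, X}) M p q r)
    (hC : TilesInto (convexHull ℝ {A, X, C}) N p q r) :
    TilesInto (convexHull ℝ {A, B, C}) (M + N) p q r := by
  rw [← convexHull_triple_union_of_wbtw h]
  exact hB.union hC (disjoint_interior_convexHull_of_wbtw one_lt_finrank_plane h A)

end TilesInto

end Tilings

theorem stmt14_general {a b c : ℝ} (ha : 0 < a) (hb : 0 < b) (h : c ^ 2 = a ^ 2 + b ^ 2 + a * b)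
    {n N : ℕ} (hn : 0 < n) (heq : TilesInto (EquilateralTri (n * b)) N a b c) {Δ : Set Plane}
    (hΔ : IsTriangle (n * c) (n * c) (n * (b + 2 * a)) Δ) : TilesInto Δ (N + 2 * n ^ 2) a b c := by
  obtain ⟨P, Y, Z, hYZ, hPZ, hPY, rfl⟩ := hΔ.rotate
  have hn₀ : (0 : ℝ) < n := by exact_mod_cast hn
  obtain ⟨Q, R, hYQZ, hQRZ, hYQ, hQR, hRZ, hPQ, hPR⟩ :=
    exists_dist_eq_of_isosceles (mul_pos hn₀ ha) (mul_pos hn₀ hb)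
      (by linear_combination n ^ 2 * h : (n * c) ^ 2 = _) (by linear_combination hYZ) hPZ hPY
  have tiles_PYQ : TilesInto (convexHull ℝ {P, Y, Q}) (n ^ 2) a b c :=
    IsTriangle.tilesInto_sq hn ⟨P, Y, Q, hYQ, hPQ, hPY, rfl⟩
  have tiles_PRZ : TilesInto (convexHull ℝ {P, R, Z}) (n ^ 2) a b c :=
    IsTriangle.tilesInto_sq hn (IsTriangle.swap ⟨P, R, Z, hRZ, hPZ, hPR, rfl⟩)
  have tiles_PQR : TilesInto (convexHull ℝ {P, Q, R}) N a b c := by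
    obtain ⟨f, hf⟩ := (isTriangle_equilateralTri (by positivity)).exists_image_eq
      ⟨P, Q, R, hQR, hPR, hPQ, rfl⟩
    exact hf ▸ heq.image f
  convert tiles_PYQ.of_wbtw hYQZ (tiles_PQR.of_wbtw hQRZ tiles_PRZ) using 1
  ring

theorem stmt14 (a b c : ℕ) (ha : 0 < a) (hb : 0 < b) (hc : 0 < c)
    (hab : Nat.Coprime a b) (hac : Nat.Coprime a c) (hbc : Nat.Coprime b c)
    (h : c ^ 2 = a ^ 2 + b ^ 2 + a * b) (m : ℕ) (hm : 0 < m)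
    (heq : TilesInto (EquilateralTri ((m : ℝ) * a * b)) (m ^ 2 * a * b) a b c) :
    ∀ Δ : Set Plane,
      IsTriangle ((m : ℝ) * a * c) ((m : ℝ) * a * c) ((m : ℝ) * a * (b + 2 * a)) Δ →
      TilesInto Δ (m ^ 2 * a * (b + 2 * a)) a b c := by
  intro Δ hΔ
  convert stmt14_general (a := (a : ℝ)) (b := b) (c := c) (n := m * a) (by exact_mod_cast ha)
    (by exact_mod_cast hb) (by exact_mod_cast h) (Nat.mul_pos hm ha) (by simpa using heq)
    (by simpa using hΔ) using 1
  ring
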